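/- arXiv:2311.17610 — 2 statements merged into one kernel-verified Lean document; each statement's English description precedes it below -/
import Mathlib

section
/- Let (V, ω) be a symplectic vector space and let J₀ and J be two ω-compatible complex structures on V, with associated metric g₀(x, y) := ω(x, J₀ y). Set S := −J₀ ∘ J. Then: (1) S is g₀-symmetric, i.e., g₀(Sx, y) = g₀(x, Sy) for all x, y; (2) S is g₀-positive-definite, i.e., g₀(Sx, x) > 0 for all x ≠ 0; (3) S is symplectic, i.e., ω(Sx, Sy) = ω(x, y) for all x, y; (4) S ∘ J₀ ∘ S = J₀; and (5) J = J₀ ∘ S. -/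
/-!
The endomorphism `S = -J₀ ∘ J` compares the two metrics: since `J₀` preserves `ω` and `J` is
`ω`-skew-adjoint, `g₀(S x, y) = g_J(x, y)`, and since `J₀ ∘ S = J`, also `g₀(x, S y) = g_J(x, y)`.
Hence `S` is `g₀`-symmetric, and it inherits its positivity from `g_J`.
-/

section Monoid

variable {A : Type*} [Monoid A] [HasDistribNeg A] {a b : A}

theorem mul_neg_mul_cancel_of_mul_self_eq_neg_one (ha : a * a = -1) : a * -(a * b) = b := by
  rw [mul_neg, ← mul_assoc, ha, neg_one_mul, neg_neg]

theorem neg_mul_mul_mul_neg_mul_of_mul_self_eq_neg_one (ha : a * a = -1) (hb : b * b = -1) :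
    -(a * b) * a * -(a * b) = a := by
  rw [mul_assoc, mul_neg_mul_cancel_of_mul_self_eq_neg_one ha, neg_mul, mul_assoc, hb,
    mul_neg_one, neg_neg]

end Monoid

section BilinForm

open LinearMap (BilinForm)

variable {R V : Type*} [CommRing R] [AddCommGroup V] [Module R V] {ω : BilinForm R V}

section IsOrthogonal

variable {f g : V → V}

theorem isOrthogonal_comp (hf : ω.IsOrthogonal f) (hg : ω.IsOrthogonal g) :
    ω.IsOrthogonal (f ∘ g) :=
  fun x y ↦ (hf (g x) (g y)).trans (hg x y)

theorem isOrthogonal_neg (hf : ω.IsOrthogonal f) : ω.IsOrthogonal (-f) := fun x y ↦ by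
  rw [Pi.neg_apply, Pi.neg_apply, map_neg, map_neg, LinearMap.neg_apply, neg_neg, hf]

theorem isSkewAdjoint_of_isOrthogonal (hf : ω.IsOrthogonal f) (hf_sq : ∀ x, f (f x) = -x) :
    ω.IsSkewAdjoint f := fun x y ↦
  calc
    ω (f x) y = ω (f (f x)) (f y) := (hf _ _).symm
    _ = ω x (-f y) := by rw [hf_sq, map_neg, map_neg, LinearMap.neg_apply]

end IsOrthogonal

/-- The bilinear form `g_J(x, y) = ω(x, J y)`, which is the metric associated with `J` when `J` is
an `ω`-compatible complex structure. It is defined for every endomorphism `J`. -/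
def associatedForm (ω : BilinForm R V) (J : Module.End R V) : BilinForm R V :=
  ω.compl₂ J

@[simp]
theorem associatedForm_apply (J : Module.End R V) (x y : V) :
    associatedForm ω J x y = ω x (J y) :=
  rfl

variable {J₀ J : Module.End R V}

theorem associatedForm_apply_neg_mul (hJ₀ : J₀ * J₀ = -1) (x y : V) :
    associatedForm ω J₀ x ((-(J₀ * J)) y) = associatedForm ω J x y := by
  rw [associatedForm_apply, ← Module.End.mul_apply,
    mul_neg_mul_cancel_of_mul_self_eq_neg_one hJ₀, associatedForm_apply]

theorem associatedForm_neg_mul_apply (hJ₀ : ω.IsOrthogonal J₀) (hJ : ω.IsSkewAdjoint J)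
    (x y : V) : associatedForm ω J₀ ((-(J₀ * J)) x) y = associatedForm ω J x y :=
  calc
    ω (-J₀ (J x)) (J₀ y) = -ω (J x) y := by rw [map_neg, LinearMap.neg_apply, hJ₀]
    _ = ω x (J y) := by rw [hJ, Pi.neg_apply, map_neg, neg_neg]

theorem isSelfAdjoint_associatedForm_neg_mul (hJ₀_sq : J₀ * J₀ = -1) (hJ₀ : ω.IsOrthogonal J₀)
    (hJ : ω.IsSkewAdjoint J) :
    (associatedForm ω J₀).IsSelfAdjoint (-(J₀ * J) : Module.End R V) := fun x y ↦
  (associatedForm_neg_mul_apply hJ₀ hJ x y).trans (associatedForm_apply_neg_mul hJ₀_sq x y).symm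

theorem neg_J0_comp_J_properties_general [LT R] {S : Module.End R V}
    (hJ₀ : J₀ * J₀ = -1) (hJ : J * J = -1)
    (hcompat₀ : ω.IsOrthogonal J₀) (hcompat : ω.IsOrthogonal J)
    (htame : ∀ x, x ≠ 0 → 0 < associatedForm ω J x x) (hS : S = -(J₀ * J)) :
    (associatedForm ω J₀).IsSelfAdjoint S ∧
    (∀ x, x ≠ 0 → 0 < associatedForm ω J₀ (S x) x) ∧
    ω.IsOrthogonal S ∧
    S * J₀ * S = J₀ ∧
    J = J₀ * S := by
  subst hS
  have hskew : ω.IsSkewAdjoint J :=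
    isSkewAdjoint_of_isOrthogonal hcompat (LinearMap.congr_fun hJ)
  have hcomp : ω.IsOrthogonal (J₀ ∘ J) := isOrthogonal_comp hcompat₀ hcompat
  refine ⟨isSelfAdjoint_associatedForm_neg_mul hJ₀ hcompat₀ hskew, fun x hx ↦ ?_,
    isOrthogonal_neg hcomp, neg_mul_mul_mul_neg_mul_of_mul_self_eq_neg_one hJ₀ hJ,
    (mul_neg_mul_cancel_of_mul_self_eq_neg_one hJ₀).symm⟩
  rw [associatedForm_neg_mul_apply hcompat₀ hskew]
  exact htame x hx

end BilinForm

/-- Let `(V, ω)` be a symplectic vector space and `J₀`, `J` two `ω`-compatible complex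
structures, with associated metric `g₀(x,y) := ω(x, J₀ y)`. Set `S := -J₀ ∘ J`. Then
`S` is `g₀`-symmetric, `g₀`-positive-definite, symplectic (`ω(Sx,Sy) = ω(x,y)`),
satisfies `S ∘ J₀ ∘ S = J₀`, and `J = J₀ ∘ S`. -/
theorem neg_J0_comp_J_properties
    (V : Type*) [AddCommGroup V] [Module ℝ V]
    (ω : V →ₗ[ℝ] V →ₗ[ℝ] ℝ) (hω : ∀ x : V, ω x x = 0)
    (hnondeg : ∀ x : V, (∀ y : V, ω x y = 0) → x = 0)
    (J₀ J : V →ₗ[ℝ] V)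
    (hJ₀ : ∀ x : V, J₀ (J₀ x) = -x)
    (hJ : ∀ x : V, J (J x) = -x)
    (hcompat₀ : ∀ x y : V, ω (J₀ x) (J₀ y) = ω x y)
    (htame₀ : ∀ x : V, x ≠ 0 → 0 < ω x (J₀ x))
    (hcompat : ∀ x y : V, ω (J x) (J y) = ω x y)
    (htame : ∀ x : V, x ≠ 0 → 0 < ω x (J x))
    (S : V →ₗ[ℝ] V) (hS : ∀ x : V, S x = -(J₀ (J x))) :
    (∀ x y : V, ω (S x) (J₀ y) = ω x (J₀ (S y))) ∧
    (∀ x : V, x ≠ 0 → 0 < ω (S x) (J₀ x)) ∧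
    (∀ x y : V, ω (S x) (S y) = ω x y) ∧
    (∀ x : V, S (J₀ (S x)) = J₀ x) ∧
    (∀ x : V, J x = J₀ (S x)) := by
  have ⟨hsymm, hpos, hsymp, hconj, hJ_eq⟩ := neg_J0_comp_J_properties_general
    (LinearMap.ext hJ₀) (LinearMap.ext hJ) hcompat₀ hcompat htame (LinearMap.ext hS)
  exact ⟨hsymm, hpos, hsymp, LinearMap.congr_fun hconj, LinearMap.congr_fun hJ_eq⟩
end

section
/- Let n ≥ 1 and let a₁, …, aₙ be positive real numbers. Then ∑ⱼ aⱼ ≤ (∏ⱼ aⱼ) · (∑ⱼ aⱼ^{−1})^{n−1}. -/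
/-!
The substitution `xⱼ = aⱼ⁻¹` turns the claim into the bound `eₙ₋₁(x) ≤ e₁(x) ^ (n - 1)` on
elementary symmetric functions, because multiplying `eₖ(a₁⁻¹, …, aₙ⁻¹)` by `∏ aⱼ` gives
`eₙ₋ₖ(a₁, …, aₙ)`. For nonnegative arguments `eₖ ≤ e₁ ^ k` holds for all `k`, since every monomial
of `eₖ` occurs in the expansion of `e₁ ^ k`.
-/

open Multiset

section CommSemiring

variable {R : Type*} [CommSemiring R]

theorem esymm_zero (s : Multiset R) : s.esymm 0 = 1 := by
  simp [esymm]

theorem esymm_card (s : Multiset R) : s.esymm (card s) = s.prod := by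
  simp [esymm]

theorem esymm_one (s : Multiset R) : s.esymm 1 = s.sum := by
  simp [esymm, powersetCard_one]

theorem esymm_cons_succ (a : R) (s : Multiset R) (k : ℕ) :
    (a ::ₘ s).esymm (k + 1) = s.esymm (k + 1) + a * s.esymm k := by
  simp [esymm, powersetCard_cons, sum_map_mul_left]

theorem esymm_le_sum_pow [PartialOrder R] [IsOrderedRing R] {s : Multiset R}
    (hs : ∀ x ∈ s, 0 ≤ x) (k : ℕ) : s.esymm k ≤ s.sum ^ k := by
  induction s using Multiset.induction generalizing k with
  | empty => cases k <;> simp [esymm, powersetCard_zero_right]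
  | cons a s ih =>
    obtain ⟨ha, hs⟩ := forall_mem_cons.mp hs
    have hsum : 0 ≤ s.sum := sum_nonneg hs
    cases k with
    | zero => simp [esymm_zero]
    | succ k =>
      calc (a ::ₘ s).esymm (k + 1)
          = s.esymm (k + 1) + a * s.esymm k := esymm_cons_succ a s k
        _ ≤ s.sum ^ (k + 1) + a * s.sum ^ k := by gcongr <;> exact ih hs _
        _ = (a + s.sum) * s.sum ^ k := by ring
        _ ≤ (a + s.sum) * (a + s.sum) ^ k := by
          gcongr
          exact le_add_of_nonneg_left ha
        _ = (a ::ₘ s).sum ^ (k + 1) := by rw [sum_cons, pow_succ']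

end CommSemiring

section Semifield

variable {K : Type*} [Semifield K]

theorem prod_mul_esymm_map_inv {s : Multiset K} (hs : 0 ∉ s) {k l : ℕ} (hkl : k + l = card s) :
    s.prod * (s.map (·⁻¹)).esymm k = s.esymm l := by
  induction s using Multiset.induction generalizing k l with
  | empty =>
    obtain ⟨rfl, rfl⟩ : k = 0 ∧ l = 0 := by simpa using hkl
    simp [esymm_zero]
  | cons a s ih =>
    rcases k with _ | k
    · obtain rfl : l = card (a ::ₘ s) := by simpa using hkl
      rw [esymm_zero, esymm_card, mul_one]
    rcases l with _ | l
    · obtain hk : k + 1 = card ((a ::ₘ s).map (·⁻¹)) := by simpa using hkl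
      rw [hk, esymm_card, esymm_zero, prod_map_inv, map_id', mul_inv_cancel₀ (prod_ne_zero hs)]
    obtain ⟨ha, hs⟩ : a ≠ 0 ∧ 0 ∉ s := by simpa [eq_comm] using hs
    rw [card_cons] at hkl
    have ih_succ : s.prod * (s.map (·⁻¹)).esymm (k + 1) = s.esymm l := ih hs (by lia)
    have ih_self : s.prod * (s.map (·⁻¹)).esymm k = s.esymm (l + 1) := ih hs (by lia)
    calc (a ::ₘ s).prod * ((a ::ₘ s).map (·⁻¹)).esymm (k + 1)
        = a * s.prod * ((s.map (·⁻¹)).esymm (k + 1) + a⁻¹ * (s.map (·⁻¹)).esymm k) := by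
          rw [prod_cons, map_cons, esymm_cons_succ]
      _ = s.prod * (s.map (·⁻¹)).esymm k + a * (s.prod * (s.map (·⁻¹)).esymm (k + 1)) := by
          field_simp
          ring
      _ = (a ::ₘ s).esymm (l + 1) := by rw [ih_self, ih_succ, esymm_cons_succ]

theorem sum_le_prod_mul_sum_inv_pow_general [LinearOrder K] [IsStrictOrderedRing K]
    {s : Multiset K} (hs : ∀ x ∈ s, 0 < x) {k l : ℕ} (hkl : k + l = card s) :
    s.esymm l ≤ s.prod * (s.map (·⁻¹)).sum ^ k := by
  have hinv : ∀ y ∈ s.map (·⁻¹), 0 ≤ y := by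
    simpa using fun x hx ↦ (hs x hx).le
  rw [← prod_mul_esymm_map_inv (fun h ↦ (hs 0 h).false) hkl]
  exact mul_le_mul_of_nonneg_left (esymm_le_sum_pow hinv k) (prod_nonneg fun x hx ↦ (hs x hx).le)

end Semifield

/-- For positive reals `a₁, …, aₙ` (`n ≥ 1`),
`∑ aⱼ ≤ (∏ aⱼ) * (∑ aⱼ⁻¹)^(n-1)`. -/
theorem sum_le_prod_mul_sum_inv_pow
    (n : ℕ) (hn : 1 ≤ n) (a : Fin n → ℝ) (ha : ∀ j, 0 < a j) :
    ∑ j, a j ≤ (∏ j, a j) * (∑ j, (a j)⁻¹) ^ (n - 1) := by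
  have h := sum_le_prod_mul_sum_inv_pow_general (s := Finset.univ.val.map a) (k := n - 1) (l := 1)
    (by simpa using ha) (by simpa using Nat.sub_add_cancel hn)
  rwa [esymm_one, map_map] at h
end
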